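/- arXiv:1411.5244 — 2 statements merged into one kernel-verified Lean document; each statement's English description precedes it below -/
import Mathlib

section
/- Let r > 0 and let v : D̄_r⁺(0) → ℝ be continuous, C¹ on D_r⁺(0), with v = 0 on {x₁ = 0} and ∫_{D_r⁺(0)} |∇v|² dx < ∞. Then (1/r²)·∫_{D_r⁺(0)} v² dx ≤ (1/r)·∫_{∂D_r⁺(0)} v² dσ + ∫_{D_r⁺(0)} |∇v|² dx. -/
/-! The estimate follows by integrating along rays. For a fixed angle `θ` put
`g s = v (s e^{iθ})`. On `(0, r)`,
`(s² g²)' = 2 s g² + 2 s² g g' ≥ s g² - s³ g'² ≥ s g² - r² s g'²`,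
so the fundamental theorem of calculus gives
`∫₀ʳ s g² ds ≤ r² g(r)² + r² ∫₀ʳ s g'² ds` (`ray_estimate`). Since `e^{iθ}` is a unit vector,
`g'² ≤ |∇v|²` by Cauchy–Schwarz (`ray_deriv_sq_le`). Integrating over `θ ∈ (-π/2, π/2)` in polar
coordinates (`halfDisk_polar`) and dividing by `r²` yields the claim. Fubini's theorem supplies the
integrability of `s |∇v|²` along almost every ray. -/

open MeasureTheory Real Set

noncomputable section

/-- The open half-disk `D_r⁺(0) = {x ∈ ℝ² : |x| < r, x₁ > 0}` (with `ℝ² = ℂ`). -/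
def halfDisk0 (r : ℝ) : Set ℂ := {x : ℂ | dist x 0 < r ∧ 0 < x.re}

/-- Arclength integral of `f` over the circular part `∂D_r⁺(0)` of the boundary,
parametrized by the angle `θ ∈ (−π/2, π/2)`. -/
def bdryIntR (r : ℝ) (f : ℂ → ℝ) : ℝ :=
  ∫ θ in Ioo (-(π / 2)) (π / 2), r * f (circleMap 0 r θ)

/-- The coordinate rectangle `(0, r) × (-π/2, π/2)` of the half-disk in polar coordinates. -/
def polarRect (r : ℝ) : Set (ℝ × ℝ) := Ioo 0 r ×ˢ Ioo (-(π / 2)) (π / 2)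

lemma circleMap_mem_halfDisk0 {r : ℝ} {p : ℝ × ℝ} (hp : p ∈ polarRect r) :
    circleMap 0 p.1 p.2 ∈ halfDisk0 r := by
  obtain ⟨⟨h1, h2⟩, h3⟩ := hp
  refine ⟨?_, ?_⟩
  · simpa [abs_of_pos h1] using h2
  · simpa [circleMap, Complex.exp_ofReal_mul_I_re] using mul_pos h1 (cos_pos_of_mem_Ioo h3)

lemma continuous_circleMap_uncurry : Continuous fun p : ℝ × ℝ => circleMap 0 p.1 p.2 := by
  unfold circleMap
  fun_prop

lemma circleMap_mem_closure {r s θ : ℝ} (hr : 0 < r) (hs : s ∈ Icc 0 r)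
    (hθ : θ ∈ Icc (-(π / 2)) (π / 2)) : circleMap 0 s θ ∈ closure (halfDisk0 r) := by
  have hpi := pi_pos
  have h : MapsTo (fun p : ℝ × ℝ => circleMap 0 p.1 p.2) (polarRect r) (halfDisk0 r) :=
    fun p hp => circleMap_mem_halfDisk0 hp
  refine h.closure continuous_circleMap_uncurry (x := (s, θ)) ?_
  rw [polarRect, closure_prod_eq, closure_Ioo hr.ne, closure_Ioo (by linarith)]
  exact ⟨hs, hθ⟩

lemma isOpen_halfDisk0 (r : ℝ) : IsOpen (halfDisk0 r) :=
  Metric.isOpen_ball.inter (isOpen_lt continuous_const Complex.continuous_re)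

lemma polarCoord_symm_image_polarRect (r : ℝ) :
    polarCoord.symm '' polarRect r = Complex.measurableEquivRealProd.symm ⁻¹' halfDisk0 r := by
  have hpi := pi_pos
  ext q
  constructor
  · rintro ⟨p, hp, rfl⟩
    have := circleMap_mem_halfDisk0 hp
    rw [mem_preimage, Complex.measurableEquivRealProd_symm_polarCoord_symm_apply]
    convert this using 1
    simp [circleMap, Complex.exp_mul_I]
  · rintro ⟨h1, h2⟩
    have h2' : 0 < q.1 := h2
    have hsrc : q ∈ polarCoord.source := Or.inl h2'
    refine ⟨polarCoord q, ⟨⟨(polarCoord.map_source hsrc).1, ?_⟩, ?_⟩, polarCoord.left_inv hsrc⟩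
    · rw [dist_zero_right, Complex.norm_def, Complex.normSq_apply, ← pow_two, ← pow_two] at h1
      exact h1
    · have := Complex.abs_arg_lt_pi_div_two_iff (z := Complex.equivRealProd.symm q)
      exact abs_lt.1 (this.2 (Or.inl h2'))

/-- Change of variables to polar coordinates on the half-disk. -/
lemma halfDisk_polar (r : ℝ) (f : ℂ → ℝ) :
    (IntegrableOn f (halfDisk0 r) ↔
      IntegrableOn (fun p : ℝ × ℝ => p.1 * f (circleMap 0 p.1 p.2)) (polarRect r)) ∧
    ∫ x in halfDisk0 r, f x = ∫ p in polarRect r, p.1 * f (circleMap 0 p.1 p.2) := by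
  have hpi := pi_pos
  have hm : MeasurableSet (polarRect r) := measurableSet_Ioo.prod measurableSet_Ioo
  have hsub : polarRect r ⊆ polarCoord.target := by
    rintro p ⟨⟨h1, -⟩, h2, h3⟩
    exact ⟨h1, by linarith, by linarith⟩
  have hinj : InjOn polarCoord.symm (polarRect r) := polarCoord.symm.injOn.mono hsub
  have hder : ∀ p ∈ polarRect r,
      HasFDerivWithinAt polarCoord.symm (fderivPolarCoordSymm p) (polarRect r) p :=
    fun p _ => (hasFDerivAt_polarCoord_symm p).hasFDerivWithinAt
  have hmp := Complex.volume_preserving_equiv_real_prod.symm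
  have hemb := Complex.measurableEquivRealProd.symm.measurableEmbedding
  have hcongr : EqOn
      (fun p : ℝ × ℝ => |(fderivPolarCoordSymm p).det| •
        f (Complex.measurableEquivRealProd.symm (polarCoord.symm p)))
      (fun p : ℝ × ℝ => p.1 * f (circleMap 0 p.1 p.2)) (polarRect r) := by
    intro p hp
    have : (0 : ℝ) < p.1 := hp.1.1
    simp only [det_fderivPolarCoordSymm, abs_of_pos this, smul_eq_mul,
      Complex.measurableEquivRealProd_symm_polarCoord_symm_apply]
    congr 2
    simp [circleMap, Complex.exp_mul_I]
  constructor
  · rw [← hmp.integrableOn_comp_preimage hemb, ← polarCoord_symm_image_polarRect,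
      integrableOn_image_iff_integrableOn_abs_det_fderiv_smul volume hm hder hinj]
    exact integrableOn_congr_fun hcongr hm
  · rw [← hmp.setIntegral_preimage_emb hemb, ← polarCoord_symm_image_polarRect,
      integral_image_eq_integral_abs_det_fderiv_smul volume hm hder hinj]
    exact setIntegral_congr_fun hm hcongr

/-- The one-dimensional weighted Poincaré inequality on a ray. The function `G` dominates the
squared derivative. -/
lemma ray_estimate {r : ℝ} (hr : 0 < r) {g g' G : ℝ → ℝ} (hg : ContinuousOn g (Icc 0 r))
    (hd : ∀ s ∈ Ioo 0 r, HasDerivAt g (g' s) s) (hG : ∀ s ∈ Ioo 0 r, g' s ^ 2 ≤ G s)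
    (hi : IntegrableOn (fun s => s * G s) (Ioo 0 r)) :
    ∫ s in Ioo 0 r, s * g s ^ 2 ≤ r ^ 2 * g r ^ 2 + r ^ 2 * ∫ s in Ioo 0 r, s * G s := by
  have hc1 : ContinuousOn (fun s => s * g s ^ 2) (Icc 0 r) := continuousOn_id.mul (hg.pow 2)
  have hi1 : IntegrableOn (fun s => s * g s ^ 2) (Ioo 0 r) :=
    (hc1.integrableOn_compact isCompact_Icc).mono_set Ioo_subset_Icc_self
  have hi2 : IntegrableOn (fun s => r ^ 2 * (s * G s)) (Ioo 0 r) := hi.const_mul _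
  have key := intervalIntegral.integral_le_sub_of_hasDeriv_right_of_le
    (g := fun s => s ^ 2 * g s ^ 2)
    (g' := fun s => (2 * s) * g s ^ 2 + s ^ 2 * (2 * g s * g' s))
    (φ := fun s => s * g s ^ 2 - r ^ 2 * (s * G s)) hr.le
    ((continuousOn_id.pow 2).mul (hg.pow 2)) (fun s hs => ?_) ?_ (fun s hs => ?_)
  · rw [intervalIntegral.integral_of_le hr.le, integral_Ioc_eq_integral_Ioo,
      integral_sub hi1 hi2, integral_const_mul] at key
    norm_num at key
    linarith
  · have h1 : HasDerivAt (fun s : ℝ => s ^ 2) (2 * s) s := by simpa using hasDerivAt_pow 2 s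
    have h2 : HasDerivAt (fun s : ℝ => g s ^ 2) (2 * g s * g' s) s := by
      simpa using (hd s hs).fun_pow 2
    exact (h1.mul h2).hasDerivWithinAt
  · rw [integrableOn_Icc_iff_integrableOn_Ioo]
    exact hi1.sub hi2
  · have h0 : 0 < s := hs.1
    have hG0 : 0 ≤ G s := (sq_nonneg _).trans (hG s hs)
    -- `s (g + s g')² ≥ 0`, combined with `s² g'² ≤ s² G ≤ r² G`
    have h3 : 0 ≤ s * (g s + s * g' s) ^ 2 := by positivity
    have h4 : s * (s ^ 2 * g' s ^ 2) ≤ s * (r ^ 2 * G s) := by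
      have := hG s hs
      have := hs.2.le
      gcongr
    linarith

lemma ray_deriv_sq_le (L : ℂ →L[ℝ] ℝ) (θ : ℝ) :
    L (Complex.exp (θ * Complex.I)) ^ 2 ≤ L 1 ^ 2 + L Complex.I ^ 2 := by
  have h : Complex.exp (θ * Complex.I) = cos θ • (1 : ℂ) + sin θ • Complex.I := by
    simp [Complex.exp_mul_I]
  rw [h, map_add, map_smul, map_smul, smul_eq_mul, smul_eq_mul]
  nlinarith [sq_nonneg (sin θ * L 1 - cos θ * L Complex.I), sin_sq_add_cos_sq θ]

/-- The ray estimate for the restriction of `v` to the ray of angle `θ`. -/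
lemma ray_estimate_halfDisk {r : ℝ} (hr : 0 < r) {v : ℂ → ℝ}
    (hcont : ContinuousOn v (closure (halfDisk0 r))) (hC1 : ContDiffOn ℝ 1 v (halfDisk0 r))
    {θ : ℝ} (hθ : θ ∈ Ioo (-(π / 2)) (π / 2))
    (hi : IntegrableOn (fun s : ℝ => s * ((fderiv ℝ v (circleMap 0 s θ) 1) ^ 2 +
      (fderiv ℝ v (circleMap 0 s θ) Complex.I) ^ 2)) (Ioo 0 r)) :
    ∫ s in Ioo 0 r, s * v (circleMap 0 s θ) ^ 2 ≤ r ^ 2 * v (circleMap 0 r θ) ^ 2 +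
      r ^ 2 * ∫ s in Ioo 0 r, s * ((fderiv ℝ v (circleMap 0 s θ) 1) ^ 2 +
        (fderiv ℝ v (circleMap 0 s θ) Complex.I) ^ 2) := by
  refine ray_estimate hr (g := fun s => v (circleMap 0 s θ))
    (g' := fun s => fderiv ℝ v (circleMap 0 s θ) (Complex.exp (θ * Complex.I)))
    (G := fun s => (fderiv ℝ v (circleMap 0 s θ) 1) ^ 2 +
      (fderiv ℝ v (circleMap 0 s θ) Complex.I) ^ 2) ?_ ?_ ?_ hi
  · refine hcont.comp ?_ fun s hs => circleMap_mem_closure hr hs (Ioo_subset_Icc_self hθ)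
    exact (continuous_circleMap_uncurry.comp (Continuous.prodMk_left θ)).continuousOn
  · intro s hs
    have hmem := circleMap_mem_halfDisk0 (r := r) (p := (s, θ)) ⟨hs, hθ⟩
    have hv : DifferentiableAt ℝ v (circleMap 0 s θ) :=
      (hC1.differentiableOn one_ne_zero).differentiableAt ((isOpen_halfDisk0 r).mem_nhds hmem)
    have hc : HasDerivAt (fun s : ℝ => circleMap 0 s θ) (Complex.exp (θ * Complex.I)) s := by
      have := ((hasDerivAt_id s).ofReal_comp).mul_const (Complex.exp (θ * Complex.I))
      simpa [circleMap] using this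
    exact hv.hasFDerivAt.comp_hasDerivAt s hc
  · exact fun s _ => ray_deriv_sq_le _ θ

/-- Poincaré inequality on the half-disk for real-valued functions vanishing on the
diameter `{x₁ = 0}`:
`(1/r²)∫_{D_r⁺(0)} v² dx ≤ (1/r)∫_{∂D_r⁺(0)} v² dσ + ∫_{D_r⁺(0)} |∇v|² dx`. -/
theorem poincare_halfDisk_real
    (r : ℝ) (hr : 0 < r) (v : ℂ → ℝ)
    (hcont : ContinuousOn v (closure (halfDisk0 r)))
    (hC1 : ContDiffOn ℝ 1 v (halfDisk0 r))
    (hbc : ∀ x ∈ closure (halfDisk0 r), x.re = 0 → v x = 0)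
    (hint : IntegrableOn (fun x => (fderiv ℝ v x 1) ^ 2 + (fderiv ℝ v x Complex.I) ^ 2)
      (halfDisk0 r)) :
    (1 / r ^ 2) * ∫ x in halfDisk0 r, (v x) ^ 2 ≤
      (1 / r) * bdryIntR r (fun x => (v x) ^ 2) +
        ∫ x in halfDisk0 r, ((fderiv ℝ v x 1) ^ 2 + (fderiv ℝ v x Complex.I) ^ 2) := by
  have hbdd : Bornology.IsBounded (halfDisk0 r) :=
    Metric.isBounded_ball.subset fun x hx => hx.1
  have hv : IntegrableOn (fun x => v x ^ 2) (halfDisk0 r) :=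
    ((hcont.pow 2).integrableOn_compact hbdd.isCompact_closure).mono_set subset_closure
  obtain ⟨hv_iff, hv_eq⟩ := halfDisk_polar r fun x => v x ^ 2
  obtain ⟨hd_iff, hd_eq⟩ := halfDisk_polar r
    fun x => (fderiv ℝ v x 1) ^ 2 + (fderiv ℝ v x Complex.I) ^ 2
  have hv' := hv_iff.1 hv
  have hd' := hd_iff.1 hint
  rw [IntegrableOn, polarRect, Measure.volume_eq_prod, ← Measure.prod_restrict] at hv' hd'
  rw [hv_eq, hd_eq, polarRect, Measure.volume_eq_prod, ← Measure.prod_restrict,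
    integral_prod_symm _ hv', integral_prod_symm _ hd', bdryIntR, integral_const_mul]
  have hb : IntegrableOn (fun θ => v (circleMap 0 r θ) ^ 2) (Ioo (-(π / 2)) (π / 2)) := by
    have hc : ContinuousOn (fun θ => v (circleMap 0 r θ)) (Icc (-(π / 2)) (π / 2)) :=
      hcont.comp (continuous_circleMap 0 r).continuousOn
        fun θ hθ => circleMap_mem_closure hr (right_mem_Icc.2 hr.le) hθ
    exact ((hc.pow 2).integrableOn_compact isCompact_Icc).mono_set Ioo_subset_Icc_self
  have hb' := hb.const_mul (r ^ 2)
  have hd2 := hd'.integral_prod_right.const_mul (r ^ 2)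
  have key := integral_mono_ae hv'.integral_prod_right (hb'.add hd2) (by
    filter_upwards [hd'.prod_left_ae, ae_restrict_mem measurableSet_Ioo] with θ h1 h2
    exact ray_estimate_halfDisk hr hcont hC1 h2 h1)
  simp only [Pi.add_apply] at key
  rw [integral_add hb' hd2, integral_const_mul, integral_const_mul, ← mul_add] at key
  rw [← mul_assoc (1 / r) r, one_div_mul_cancel hr.ne', one_mul, one_div_mul_eq_div,
    div_le_iff₀' (by positivity)]
  exact key

end
end

section
/- Let a = (a₁,a₂) with 0 < a₁ < r, and let u : D̄_r⁺(π(a)) → ℂ be continuous, vanish on {x₁ = 0}, be C¹ on D_r⁺(π(a))∖{a}, and satisfy ∫_{D_r⁺(π(a))} |(i∇+A_a)u|² dx < ∞. Then (1/r)·∫_{∂D_r⁺(π(a))} |u|² dσ ≤ ∫_{D_r⁺(π(a))} |(i∇+A_a)u|² dx. -/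
/-!
The inequality is one-dimensional. On the horizontal line at height `y ≠ a₂`, which avoids the
pole `a`, the first component of `A_a` is the derivative of
`φ(t) = -½ arctan ((t - a₁) / (y - a₂))`, so the gauge change `g = e^{-iφ} u` turns `i∂₁ + A₁` into
`i∂₁`: `|g'|` is the modulus of the first component of the magnetic gradient (`deriv_gauge`).
As `g` vanishes at `t = 0`, Cauchy–Schwarz gives `|g(L)|² / L ≤ ∫₀ᴸ |g'|²`
(`sq_div_le_integral_deriv_sq`). For `L = √(r² - (y - a₂)²)` the endpoint lies on the circular arc,
so `|u(L, y)|² / L` is bounded by the energy of the slice (`slice_bound`). Integrating in `y`, Fubini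
bounds the result by the full energy, while the substitution `y = a₂ + r sin θ`, where
`L = r cos θ` and `dy = L dθ`, turns the left side into `∫ |u|² dθ = (1/r) ∫ |u|² dσ`.
-/

open MeasureTheory Real Filter Set Asymptotics

noncomputable section

/-- The open half-disk `D_r⁺(c)`: points at distance `< r` from `c` with positive
first coordinate (we identify `ℝ²` with `ℂ`). -/
def halfDisk (c : ℂ) (r : ℝ) : Set ℂ := {x : ℂ | dist x c < r ∧ 0 < x.re}

/-- Projection onto the axis `{x₁ = 0}`: `π(a) = (0, a₂)`. -/
def proj (a : ℂ) : ℂ := (a.im : ℂ) * Complex.I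

/-- First partial derivative of a complex-valued function on `ℝ² = ℂ`. -/
def pd1 (u : ℂ → ℂ) (x : ℂ) : ℂ := fderiv ℝ u x 1

/-- Second partial derivative of a complex-valued function on `ℝ² = ℂ`. -/
def pd2 (u : ℂ → ℂ) (x : ℂ) : ℂ := fderiv ℝ u x Complex.I

/-- The Aharonov–Bohm potential `A_a(x)`, encoded as the complex number whose real and
imaginary parts are its two components:
`A_a(x) = (1/2)(−(x₂−a₂)/|x−a|², (x₁−a₁)/|x−a|²) = i(x−a)/(2|x−a|²)`. -/
def abPot (a x : ℂ) : ℂ := Complex.I * (x - a) / (2 * (‖x - a‖ : ℂ) ^ 2)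

/-- First component of `A_a`. -/
def abPot1 (a x : ℂ) : ℝ := (abPot a x).re

/-- Second component of `A_a`. -/
def abPot2 (a x : ℂ) : ℝ := (abPot a x).im

/-- First component of the magnetic gradient `(i∇ + A_a)u`. -/
def mg1 (a : ℂ) (u : ℂ → ℂ) (x : ℂ) : ℂ := Complex.I * pd1 u x + (abPot1 a x : ℂ) * u x

/-- Second component of the magnetic gradient `(i∇ + A_a)u`. -/
def mg2 (a : ℂ) (u : ℂ → ℂ) (x : ℂ) : ℂ := Complex.I * pd2 u x + (abPot2 a x : ℂ) * u x

/-- `|(i∇+A_a)u|²`. -/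
def mgSq (a : ℂ) (u : ℂ → ℂ) (x : ℂ) : ℝ := ‖mg1 a u x‖ ^ 2 + ‖mg2 a u x‖ ^ 2

/-- Arclength integral of `f` over the circular part `∂D_r⁺(c)` of the boundary of a
half-disk centered at a point `c` on the axis `{x₁ = 0}`, parametrized by the angle
`θ ∈ (−π/2, π/2)`. -/
def bdryInt (c : ℂ) (r : ℝ) (f : ℂ → ℝ) : ℝ :=
  ∫ θ in Ioo (-(π / 2)) (π / 2), r * f (circleMap c r θ)

/-- Cauchy–Schwarz for a curve issuing from `0`. -/
lemma sq_div_le_integral_deriv_sq {L : ℝ} (hL : 0 < L) {g : ℝ → ℂ}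
    (hg : ContinuousOn g (Icc 0 L)) (hd : ∀ t ∈ Ioo 0 L, DifferentiableAt ℝ g t) (h0 : g 0 = 0)
    (hi : IntegrableOn (fun t => ‖deriv g t‖ ^ 2) (Ioo 0 L)) :
    ‖g L‖ ^ 2 / L ≤ ∫ t in Ioo 0 L, ‖deriv g t‖ ^ 2 := by
  have hc : ∀ c : ℝ, IntegrableOn (fun _ : ℝ => c) (Ioo 0 L) := fun c =>
    integrableOn_const (by simp)
  have hi1 : IntegrableOn (deriv g) (Ioo 0 L) := by
    refine Integrable.mono' (hi.add (hc 1)) (aestronglyMeasurable_deriv g _) ?_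
    refine Eventually.of_forall fun t => ?_
    simp only [Pi.add_apply]
    nlinarith [sq_nonneg (‖deriv g t‖ - 1), norm_nonneg (deriv g t)]
  have hftc : ∫ t in (0 : ℝ)..L, deriv g t = g L - g 0 :=
    intervalIntegral.integral_eq_sub_of_hasDerivAt_of_le hL.le hg
      (fun t ht => (hd t ht).hasDerivAt)
      ((intervalIntegrable_iff_integrableOn_Ioo_of_le hL.le).2 hi1)
  rw [intervalIntegral.integral_of_le hL.le, integral_Ioc_eq_integral_Ioo, h0, sub_zero] at hftc
  have hm : ‖g L‖ ≤ ∫ t in Ioo 0 L, ‖deriv g t‖ := by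
    rw [← hftc]; exact norm_integral_le_integral_norm _
  -- Young's inequality `2 c s ≤ s² + c²` with the optimal `c = ‖g L‖ / L`.
  have hY : ∫ t in Ioo 0 L, 2 * (‖g L‖ / L) * ‖deriv g t‖ ≤
      ∫ t in Ioo 0 L, (‖deriv g t‖ ^ 2 + (‖g L‖ / L) ^ 2) := by
    refine integral_mono (hi1.norm.const_mul _) (hi.add (hc _)) fun t => ?_
    simp only
    nlinarith [sq_nonneg (‖deriv g t‖ - ‖g L‖ / L)]
  rw [integral_const_mul, integral_add hi (hc _)] at hY
  simp only [integral_const, smul_eq_mul, measureReal_restrict_apply_univ, Real.volume_real_Ioo,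
    sub_zero, max_eq_left hL.le] at hY
  have h1 : 2 * (‖g L‖ / L) * ‖g L‖ ≤ 2 * (‖g L‖ / L) * ∫ t in Ioo 0 L, ‖deriv g t‖ :=
    mul_le_mul_of_nonneg_left hm (by positivity)
  have h2 : L * (‖g L‖ / L) ^ 2 = ‖g L‖ ^ 2 / L := by field_simp
  have h3 : 2 * (‖g L‖ / L) * ‖g L‖ = 2 * (‖g L‖ ^ 2 / L) := by ring
  linarith

/-- A primitive of the first component of `A_a` along the horizontal line at height `y ≠ a₂`. -/
def abPhase (a : ℂ) (y t : ℝ) : ℝ := -(1 / 2) * Real.arctan ((t - a.re) / (y - a.im))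

lemma hasDerivAt_abPhase (a : ℂ) {y : ℝ} (hy : y ≠ a.im) (t : ℝ) :
    HasDerivAt (abPhase a y) (abPot1 a ⟨t, y⟩) t := by
  have hy' : y - a.im ≠ 0 := sub_ne_zero.2 hy
  have h := ((((hasDerivAt_id t).sub_const a.re).div_const (y - a.im)).arctan).const_mul (-(1 / 2))
  refine h.congr_deriv ?_
  have hpos : (t - a.re) ^ 2 + (y - a.im) ^ 2 ≠ 0 := by positivity
  have hn : ‖(⟨t, y⟩ : ℂ) - a‖ ^ 2 = (t - a.re) ^ 2 + (y - a.im) ^ 2 := by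
    rw [← Complex.normSq_eq_norm_sq, Complex.normSq_apply]; simp; ring
  have hA : abPot1 a ⟨t, y⟩ = -(y - a.im) / (2 * ((t - a.re) ^ 2 + (y - a.im) ^ 2)) := by
    have : (2 * (‖(⟨t, y⟩ : ℂ) - a‖ : ℂ) ^ 2) =
        ((2 * ((t - a.re) ^ 2 + (y - a.im) ^ 2) : ℝ) : ℂ) := by
      rw [← hn]; push_cast; rfl
    rw [abPot1, abPot, this, Complex.div_ofReal_re]
    simp
  rw [hA]
  simp only [id_eq]
  have : 1 + ((t - a.re) / (y - a.im)) ^ 2 ≠ 0 := by positivity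
  have h4 : (y - a.im) ^ 2 + (t - a.re) ^ 2 ≠ 0 := by positivity
  field_simp
  ring

lemma hasDerivAt_horizontal (y t : ℝ) : HasDerivAt (fun s : ℝ => (⟨s, y⟩ : ℂ)) 1 t := by
  have h : (fun s : ℝ => (⟨s, y⟩ : ℂ)) = fun s : ℝ => (s : ℂ) + (y : ℂ) * Complex.I := by
    funext s; exact Complex.mk_eq_add_mul_I s y
  rw [h]
  exact (Complex.ofRealCLM.hasDerivAt).add_const _

/-- The restriction of `u` to the horizontal line at height `y`, in the gauge that removes
`A_a`. -/
def gauged (a : ℂ) (u : ℂ → ℂ) (y t : ℝ) : ℂ :=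
  Complex.exp (-(Complex.I * abPhase a y t)) * u ⟨t, y⟩

lemma norm_gauged (a : ℂ) (u : ℂ → ℂ) (y t : ℝ) : ‖gauged a u y t‖ = ‖u ⟨t, y⟩‖ := by
  rw [gauged, norm_mul, Complex.norm_exp]
  simp

lemma deriv_gauge (a : ℂ) (u : ℂ → ℂ) {y : ℝ} (hy : y ≠ a.im) {t : ℝ}
    (hu : DifferentiableAt ℝ u ⟨t, y⟩) :
    DifferentiableAt ℝ (gauged a u y) t ∧ ‖deriv (gauged a u y) t‖ = ‖mg1 a u ⟨t, y⟩‖ := by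
  have h1 : HasDerivAt (fun s : ℝ => u ⟨s, y⟩) (pd1 u ⟨t, y⟩) t :=
    hu.hasFDerivAt.comp_hasDerivAt t (hasDerivAt_horizontal y t)
  have h2 := ((((hasDerivAt_abPhase a hy t).ofReal_comp).const_mul Complex.I).neg).cexp
  have h3 : HasDerivAt (gauged a u y) _ t := h2.mul h1
  refine ⟨h3.differentiableAt, ?_⟩
  have h4 : deriv (gauged a u y) t =
      -Complex.I * Complex.exp (-(Complex.I * abPhase a y t)) * mg1 a u ⟨t, y⟩ := by
    rw [h3.deriv, mg1]
    simp only [Pi.neg_apply]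
    linear_combination (Complex.exp (-(Complex.I * abPhase a y t)) * pd1 u ⟨t, y⟩) * Complex.I_sq
  rw [h4, norm_mul, norm_mul, Complex.norm_exp]
  simp

lemma mk_mem_halfDisk_iff (a : ℂ) {r : ℝ} (hr : 0 < r) (y t : ℝ) :
    (⟨t, y⟩ : ℂ) ∈ halfDisk (proj a) r ↔ t ∈ Ioo 0 (√(r ^ 2 - (y - a.im) ^ 2)) := by
  have h : dist (⟨t, y⟩ : ℂ) (proj a) = √(t ^ 2 + (y - a.im) ^ 2) := by
    rw [Complex.dist_eq_re_im]; simp [proj]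
  simp only [halfDisk, mem_ofPred_eq, h, mem_Ioo]
  rw [and_comm]
  refine and_congr_right fun ht => ?_
  rw [Real.sqrt_lt' hr, Real.lt_sqrt ht.le]
  constructor <;> intro h <;> linarith

lemma isOpen_halfDisk (c : ℂ) (r : ℝ) : IsOpen (halfDisk c r) := by
  have h1 : IsOpen {x : ℂ | dist x c < r} := isOpen_lt (by fun_prop) continuous_const
  have h2 : IsOpen {x : ℂ | 0 < x.re} := isOpen_lt continuous_const Complex.continuous_re
  exact h1.inter h2

/-- The one-dimensional trace inequality on the slice of the half-disk at height `y`. -/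
lemma slice_bound (a : ℂ) (r : ℝ) (hr : 0 < r) (u : ℂ → ℂ)
    (hcont : ContinuousOn u (closure (halfDisk (proj a) r)))
    (hbc : ∀ x ∈ closure (halfDisk (proj a) r), x.re = 0 → u x = 0)
    (hC1 : ContDiffOn ℝ 1 u (halfDisk (proj a) r \ {a}))
    {y : ℝ} (hy : y ≠ a.im) (hyr : y ∈ Ioo (a.im - r) (a.im + r))
    (hi : Integrable fun t : ℝ => (halfDisk (proj a) r).indicator (mgSq a u) ⟨t, y⟩) :
    ‖u ⟨√(r ^ 2 - (y - a.im) ^ 2), y⟩‖ ^ 2 / √(r ^ 2 - (y - a.im) ^ 2) ≤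
      ∫ t : ℝ, (halfDisk (proj a) r).indicator (mgSq a u) ⟨t, y⟩ := by
  have hmem := mk_mem_halfDisk_iff a hr y
  have hL : 0 < √(r ^ 2 - (y - a.im) ^ 2) := by
    apply Real.sqrt_pos.2
    nlinarith [hyr.1, hyr.2]
  set L := √(r ^ 2 - (y - a.im) ^ 2)
  have hind : (fun t : ℝ => (halfDisk (proj a) r).indicator (mgSq a u) ⟨t, y⟩) =
      (Ioo 0 L).indicator fun t => mgSq a u ⟨t, y⟩ := by
    funext t
    by_cases h : t ∈ Ioo 0 L
    · rw [indicator_of_mem h, indicator_of_mem ((hmem t).2 h)]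
    · rw [indicator_of_notMem h, indicator_of_notMem (mt (hmem t).1 h)]
  rw [hind] at hi ⊢
  rw [integrable_indicator_iff measurableSet_Ioo] at hi
  rw [integral_indicator measurableSet_Ioo]
  have hline : Continuous fun s : ℝ => (⟨s, y⟩ : ℂ) :=
    continuous_iff_continuousAt.2 fun t => (hasDerivAt_horizontal y t).continuousAt
  have hcl : MapsTo (fun s : ℝ => (⟨s, y⟩ : ℂ)) (Icc 0 L) (closure (halfDisk (proj a) r)) := by
    rw [← closure_Ioo hL.ne]
    exact MapsTo.closure (fun t ht => (hmem t).2 ht) hline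
  have hdiff : ∀ t ∈ Ioo 0 L, DifferentiableAt ℝ u ⟨t, y⟩ := fun t ht => by
    have hx : (⟨t, y⟩ : ℂ) ∈ halfDisk (proj a) r \ {a} :=
      ⟨(hmem t).2 ht, fun h => hy (congrArg Complex.im h)⟩
    exact (hC1.differentiableOn one_ne_zero).differentiableAt
      (((isOpen_halfDisk _ _).sdiff isClosed_singleton).mem_nhds hx)
  have hφ : Continuous (abPhase a y) :=
    continuous_iff_continuousAt.2 fun t => (hasDerivAt_abPhase a hy t).continuousAt
  have hg : ContinuousOn (gauged a u y) (Icc 0 L) := by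
    refine ContinuousOn.mul (Continuous.continuousOn ?_) (hcont.comp hline.continuousOn hcl)
    fun_prop
  have hg0 : gauged a u y 0 = 0 := by
    rw [gauged, hbc _ (hcl ⟨le_rfl, hL.le⟩) rfl, mul_zero]
  have hle : ∀ t ∈ Ioo 0 L, ‖deriv (gauged a u y) t‖ ^ 2 ≤ mgSq a u ⟨t, y⟩ := fun t ht => by
    rw [(deriv_gauge a u hy (hdiff t ht)).2, mgSq]
    exact le_add_of_nonneg_right (by positivity)
  have hgi : IntegrableOn (fun t => ‖deriv (gauged a u y) t‖ ^ 2) (Ioo 0 L) := by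
    refine Integrable.mono' hi ((aestronglyMeasurable_deriv _ _).norm.pow 2) ?_
    filter_upwards [ae_restrict_mem measurableSet_Ioo] with t ht
    rw [Real.norm_of_nonneg (by positivity)]
    exact hle t ht
  rw [← norm_gauged a u y L]
  exact (sq_div_le_integral_deriv_sq hL hg (fun t ht => (deriv_gauge a u hy (hdiff t ht)).1) hg0
    hgi).trans (setIntegral_mono_on hgi hi measurableSet_Ioo hle)

/-- The substitution `y = a₂ + r sin θ` parametrizing the arc by its height. -/
lemma integral_arc (a : ℂ) (r : ℝ) (hr : 0 < r) (u : ℂ → ℂ) :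
    ∫ θ in Ioo (-(π / 2)) (π / 2), ‖u (circleMap (proj a) r θ)‖ ^ 2 =
      ∫ y in Ioo (a.im - r) (a.im + r),
        ‖u ⟨√(r ^ 2 - (y - a.im) ^ 2), y⟩‖ ^ 2 / √(r ^ 2 - (y - a.im) ^ 2) := by
  have himg : (fun θ => a.im + r * Real.sin θ) '' Ioo (-(π / 2)) (π / 2) =
      Ioo (a.im - r) (a.im + r) := by
    ext y
    constructor
    · rintro ⟨θ, hθ, rfl⟩
      have hs := Real.mapsTo_sin_Ioo hθ
      constructor <;> simp only <;> nlinarith [hs.1, hs.2]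
    · intro hy
      have h1 : -1 < (y - a.im) / r := by rw [lt_div_iff₀ hr]; linarith [hy.1]
      have h2 : (y - a.im) / r < 1 := by rw [div_lt_iff₀ hr]; linarith [hy.2]
      refine ⟨Real.arcsin ((y - a.im) / r), ⟨Real.neg_pi_div_two_lt_arcsin.2 h1,
        Real.arcsin_lt_pi_div_two.2 h2⟩, ?_⟩
      simp only [Real.sin_arcsin h1.le h2.le]
      field_simp
      ring
  have hinj : InjOn (fun θ => a.im + r * Real.sin θ) (Ioo (-(π / 2)) (π / 2)) := by
    intro s hs t ht h
    refine Real.injOn_sin (Ioo_subset_Icc_self hs) (Ioo_subset_Icc_self ht) ?_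
    exact mul_left_cancel₀ hr.ne' (add_left_cancel h)
  rw [← himg, integral_image_eq_integral_abs_deriv_smul measurableSet_Ioo
    (fun θ _ => (((Real.hasDerivAt_sin θ).const_mul r).const_add a.im).hasDerivWithinAt) hinj]
  refine setIntegral_congr_fun measurableSet_Ioo fun θ hθ => ?_
  have hcos := Real.cos_pos_of_mem_Ioo hθ
  have hL : √(r ^ 2 - (a.im + r * Real.sin θ - a.im) ^ 2) = r * Real.cos θ := by
    rw [Real.sqrt_eq_iff_eq_sq _ (by positivity)] <;>
      nlinarith [Real.sin_sq_add_cos_sq θ, sq_nonneg (r * Real.cos θ)]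
  have hpt : circleMap (proj a) r θ = ⟨r * Real.cos θ, a.im + r * Real.sin θ⟩ := by
    apply Complex.ext <;> simp [circleMap, proj, Complex.exp_ofReal_mul_I_re,
      Complex.exp_ofReal_mul_I_im]
  have hpos : 0 < r * Real.cos θ := by positivity
  simp only [hL, hpt, abs_of_pos hpos, smul_eq_mul]
  field_simp

/-- Trace inequality for the magnetic gradient on the half-disk `D_r⁺(π(a))`, for
functions vanishing on the diameter `{x₁ = 0}`:
`(1/r)∫_{∂D_r⁺} |u|² dσ ≤ ∫_{D_r⁺} |(i∇+A_a)u|² dx`. -/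
theorem trace_inequality_halfDisk_magnetic
    (a : ℂ) (r : ℝ) (ha : 0 < a.re) (har : a.re < r) (u : ℂ → ℂ)
    (hcont : ContinuousOn u (closure (halfDisk (proj a) r)))
    (hbc : ∀ x ∈ closure (halfDisk (proj a) r), x.re = 0 → u x = 0)
    (hC1 : ContDiffOn ℝ 1 u (halfDisk (proj a) r \ {a}))
    (hint : IntegrableOn (mgSq a u) (halfDisk (proj a) r)) :
    (1 / r) * bdryInt (proj a) r (fun x => ‖u x‖ ^ 2) ≤
      ∫ x in halfDisk (proj a) r, mgSq a u x := by
  have hr : 0 < r := ha.trans har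
  have hL : (1 / r) * bdryInt (proj a) r (fun x => ‖u x‖ ^ 2) =
      ∫ θ in Ioo (-(π / 2)) (π / 2), ‖u (circleMap (proj a) r θ)‖ ^ 2 := by
    rw [bdryInt, integral_const_mul, ← mul_assoc, one_div_mul_cancel hr.ne', one_mul]
  have hmeas : MeasurableSet (halfDisk (proj a) r) := (isOpen_halfDisk _ _).measurableSet
  have hmp := Complex.volume_preserving_equiv_real_prod.symm
  have hF : Integrable (fun p : ℝ × ℝ => (halfDisk (proj a) r).indicator (mgSq a u) ⟨p.1, p.2⟩)
      (volume.prod volume) :=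
    (hmp.integrable_comp_emb (MeasurableEquiv.measurableEmbedding _)).2
      ((integrable_indicator_iff hmeas).2 hint)
  have hR : ∫ x in halfDisk (proj a) r, mgSq a u x =
      ∫ y : ℝ, ∫ t : ℝ, (halfDisk (proj a) r).indicator (mgSq a u) ⟨t, y⟩ := by
    rw [← integral_indicator hmeas, ← hmp.integral_comp (MeasurableEquiv.measurableEmbedding _)]
    exact integral_prod_symm _ hF
  have hnn : ∀ x, 0 ≤ (halfDisk (proj a) r).indicator (mgSq a u) x := fun x =>
    indicator_nonneg (fun x _ => by unfold mgSq; positivity) x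
  rw [hL, hR, integral_arc a r hr u]
  refine le_trans ?_ (setIntegral_le_integral (s := Ioo (a.im - r) (a.im + r))
    hF.integral_prod_right (Eventually.of_forall fun y => integral_nonneg fun t => hnn _))
  refine integral_mono_of_nonneg (Eventually.of_forall fun y => by
       simp only [Pi.zero_apply]; positivity)
    hF.integral_prod_right.integrableOn ?_
  have hne : ∀ᵐ y : ℝ, y ≠ a.im := by simp [ae_iff]
  filter_upwards [ae_restrict_mem measurableSet_Ioo, ae_restrict_of_ae hne,
    ae_restrict_of_ae hF.prod_left_ae] with y hy hya hyi
  exact slice_bound a r hr u hcont hbc hC1 hya hy hyi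

end
end
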